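/- Let μ be the standard Gaussian measure on ℝⁿ, let Ω = {x ∈ ℝⁿ : g_j(x) ≥ 0, j = 1,…,m}, and assume both Ω and ℝⁿ ∖ Ω have nonempty interior. Let f ∈ ℝ[x] be a polynomial vanishing on ∂Ω and let ω̄_d be the value of the Stokes-augmented semidefinite program with objective u_0. Then for every d ≥ d₀ the program defining ω̄_d attains its optimum and equals its semidefinite dual value; the sequence (ω̄_d)_{d ≥ d₀} is monotone non-increasing, satisfies μ(Ω) ≤ ω̄_d ≤ ō_d(1) for all d ≥ d₀, and converges to μ(Ω) as d → ∞. -/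

import Mathlib

open MeasureTheory MvPolynomial Filter Topology

noncomputable def gaussianMeasure (n : ℕ) : Measure (Fin n → ℝ) :=
  volume.withDensity fun x =>
    ENNReal.ofReal ((2 * Real.pi) ^ (-(n : ℝ) / 2) * Real.exp (-(∑ i, x i ^ 2) / 2))

noncomputable def expMeasure (n : ℕ) : Measure (Fin n → ℝ) :=
  (volume.restrict {x : Fin n → ℝ | ∀ i, 0 ≤ x i}).withDensity fun x =>
    ENNReal.ofReal (Real.exp (-(∑ i, x i)))

/-- degree |α| of a multi-index -/
def fdeg {n : ℕ} (α : Fin n →₀ ℕ) : ℕ := α.sum fun _ e => e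

/-- Riesz functional `L_u(p)` of a (pseudo-)moment sequence `u`. -/
noncomputable def riesz {n : ℕ} (u : (Fin n →₀ ℕ) → ℝ) (p : MvPolynomial (Fin n) ℝ) : ℝ :=
  ∑ α ∈ p.support, p.coeff α * u α

/-- Positive semidefiniteness of the moment matrix `M_d(u)`, expressed via its
quadratic form: `L_u(p²) ≥ 0` for all polynomials of degree at most `d`. -/
def MomPSD {n : ℕ} (d : ℕ) (u : (Fin n →₀ ℕ) → ℝ) : Prop :=
  ∀ p : MvPolynomial (Fin n) ℝ, p.totalDegree ≤ d → 0 ≤ riesz u (p ^ 2)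

/-- Positive semidefiniteness of the localizing matrix `M_k(g u)`, expressed via its
quadratic form: `L_u(g·p²) ≥ 0` for all polynomials of degree at most `k`. -/
def LocPSD {n : ℕ} (k : ℕ) (g : MvPolynomial (Fin n) ℝ) (u : (Fin n →₀ ℕ) → ℝ) : Prop :=
  ∀ p : MvPolynomial (Fin n) ℝ, p.totalDegree ≤ k → 0 ≤ riesz u (g * p ^ 2)

/-- moments of the standard Gaussian measure -/
noncomputable def gmom (n : ℕ) (α : Fin n →₀ ℕ) : ℝ :=
  ∫ x, (∏ i, x i ^ α i) ∂gaussianMeasure n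

/-- `d_j = ⌈deg g / 2⌉` -/
def dHalf {n : ℕ} (g : MvPolynomial (Fin n) ℝ) : ℕ := (g.totalDegree + 1) / 2

/-- the basic closed semi-algebraic set determined by the polynomials `g_j` -/
def semialg {n m : ℕ} (g : Fin m → MvPolynomial (Fin n) ℝ) : Set (Fin n → ℝ) :=
  {x | ∀ j, 0 ≤ eval x (g j)}

/-- feasibility for the primal semidefinite relaxation of order `d` (Gaussian measure) -/
def Feasible {n m : ℕ} (g : Fin m → MvPolynomial (Fin n) ℝ) (d : ℕ)
    (u v : (Fin n →₀ ℕ) → ℝ) : Prop :=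
  (∀ α : Fin n →₀ ℕ, fdeg α ≤ 2 * d → u α + v α = gmom n α) ∧
  MomPSD d u ∧ MomPSD d v ∧ ∀ j, LocPSD (d - dHalf (g j)) (g j) u

/-- the value `ō_d(f)` of the primal semidefinite relaxation of order `d` -/
noncomputable def obar {n m : ℕ} (g : Fin m → MvPolynomial (Fin n) ℝ) (d : ℕ)
    (f : MvPolynomial (Fin n) ℝ) : ℝ :=
  sSup {r | ∃ u v, Feasible g d u v ∧ r = riesz u f}

/-- the Stokes polynomial `p_{i,α} = ∂(x^α f)/∂x_i − x_i · x^α f` (Gaussian case) -/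
noncomputable def pStokesG {n : ℕ} (f : MvPolynomial (Fin n) ℝ) (i : Fin n) (α : Fin n →₀ ℕ) :
    MvPolynomial (Fin n) ℝ :=
  pderiv i (monomial α 1 * f) - X i * (monomial α 1 * f)

/-- the Stokes polynomial `p_{i,α} = ∂(x^α f)/∂x_i − x^α f` (exponential case) -/
noncomputable def pStokesE {n : ℕ} (f : MvPolynomial (Fin n) ℝ) (i : Fin n) (α : Fin n →₀ ℕ) :
    MvPolynomial (Fin n) ℝ :=
  pderiv i (monomial α 1 * f) - monomial α 1 * f

/-- feasibility for the Stokes-augmented semidefinite relaxation of order `d` -/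
def FeasibleS {n m : ℕ} (g : Fin m → MvPolynomial (Fin n) ℝ) (f : MvPolynomial (Fin n) ℝ)
    (d : ℕ) (u v : (Fin n →₀ ℕ) → ℝ) : Prop :=
  Feasible g d u v ∧
  ∀ (i : Fin n) (α : Fin n →₀ ℕ), (pStokesG f i α).totalDegree ≤ 2 * d →
    riesz u (pStokesG f i α) = 0

/-- the value `ω̄_d` of the Stokes-augmented semidefinite relaxation of order `d` -/
noncomputable def omegabar {n m : ℕ} (g : Fin m → MvPolynomial (Fin n) ℝ)
    (f : MvPolynomial (Fin n) ℝ) (d : ℕ) : ℝ :=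
  sSup {r | ∃ u v, FeasibleS g f d u v ∧ r = u 0}

/-- `p ∈ Σ[x]_d`: `p` is a sum of squares of polynomials of degree at most `d` -/
def IsSOS {n : ℕ} (d : ℕ) (p : MvPolynomial (Fin n) ℝ) : Prop :=
  ∃ (k : ℕ) (q : Fin k → MvPolynomial (Fin n) ℝ),
    (∀ i, (q i).totalDegree ≤ d) ∧ p = ∑ i, q i ^ 2

/-- membership in the truncated quadratic module `Q_{2d}(Ω)` -/
def InQM {n m : ℕ} (g : Fin m → MvPolynomial (Fin n) ℝ) (d : ℕ)
    (p : MvPolynomial (Fin n) ℝ) : Prop :=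
  ∃ (σ₀ : MvPolynomial (Fin n) ℝ) (σ : Fin m → MvPolynomial (Fin n) ℝ),
    IsSOS d σ₀ ∧ (∀ j, IsSOS (d - dHalf (g j)) (σ j)) ∧ p = σ₀ + ∑ j, σ j * g j

/-!
Both primal–dual pairs in the proof are conic programs `inf {I p : p ∈ P, p - 1 ∈ T}`, where `I` is
integration against the Gaussian measure `γ` and `P` is a cone of sums of squares. The optimal value
is sublinear in the right-hand side, so Hahn–Banach yields a linear functional that attains it. With
`T` the truncated quadratic module plus the span of the Stokes polynomials, that functional is an
optimal moment sequence and there is no duality gap. The restriction of `γ` to `Ω` is feasible: the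
Stokes constraints hold for it because, along every line parallel to a coordinate axis, the
integrand is the derivative of a function which vanishes at the endpoints of `Ω`.

For the limit take all sums of squares and the whole quadratic module. The functional `L` obtained
satisfies `0 ≤ L (p ^ 2) ≤ ∫ p ^ 2 ∂γ`, hence `L p = ∫ h * p ∂γ` for some `h` in `L²(γ)`.
Polynomials are dense in `L²` of any measure with exponential moments, so the inequalities satisfied
by `L` on squares become `h ≤ 1` and `0 ≤ h * g j` almost everywhere. Thus `h` is at most the
indicator of `Ω`, and the limit value `L 1 = ∫ h ∂γ` is at most `γ Ω`.
-/

section ConicDuality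

variable {E : Type*} [AddCommGroup E] [Module ℝ E]

theorem exists_linearMap_le_of_sublinear {N : E → ℝ}
    (hhom : ∀ c : ℝ, 0 < c → ∀ x, N (c • x) = c * N x)
    (hadd : ∀ x y, N (x + y) ≤ N x + N y) (e : E) :
    ∃ L : E →ₗ[ℝ] ℝ, (∀ x, L x ≤ N x) ∧ L e = N e := by
  have hzero : N 0 = 0 := by
    have := hhom 2 two_pos 0
    rw [smul_zero] at this
    linarith
  have hline : ∀ c : ℝ, c * N e ≤ N (c • e) := by
    intro c
    rcases lt_trichotomy c 0 with hc | rfl | hc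
    · have hneg := hhom (-c) (neg_pos.2 hc) e
      have hsum := hadd (c • e) (-c • e)
      rw [neg_smul, add_neg_cancel, hzero, ← neg_smul, hneg] at hsum
      linarith
    · simp [hzero]
    · exact (hhom c hc e).ge
  have hspan : ∀ c : ℝ, c • e = 0 → c • N e = 0 := by
    intro c hc
    have hpos := hline c
    have hneg := hline (-c)
    rw [neg_smul, hc, neg_zero, hzero] at hneg
    rw [hc, hzero] at hpos
    rw [smul_eq_mul]
    linarith
  obtain ⟨L, hLe, hLN⟩ := exists_extension_of_le_sublinear
    (LinearPMap.mkSpanSingleton' e (N e) hspan) N hhom hadd (by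
      rintro ⟨x, hx⟩
      obtain ⟨c, rfl⟩ := Submodule.mem_span_singleton.1 hx
      rw [LinearPMap.mkSpanSingleton'_apply]
      exact hline c)
  exact ⟨L, hLN, (hLe ⟨e, Submodule.mem_span_singleton_self e⟩).trans
    (LinearPMap.mkSpanSingleton'_apply_self (σ := RingHom.id ℝ) e (N e) hspan _)⟩

/-- The objective values of the conic program `inf {I p : p ∈ P, p - h ∈ T}`. -/
def conicValues (P T : PointedCone ℝ E) (I : E →ₗ[ℝ] ℝ) (h : E) : Set ℝ :=
  {r | ∃ p ∈ P, p - h ∈ T ∧ r = I p}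

variable {P T : PointedCone ℝ E} {I : E →ₗ[ℝ] ℝ}

theorem bddBelow_conicValues (hI : ∀ p ∈ P, 0 ≤ I p) (h : E) :
    BddBelow (conicValues P T I h) :=
  ⟨0, by rintro _ ⟨p, hp, -, rfl⟩; exact hI p hp⟩

theorem nonempty_conicValues (hdom : ∀ h, ∃ p ∈ P, p - h ∈ T) (h : E) :
    (conicValues P T I h).Nonempty :=
  let ⟨p, hp, hpT⟩ := hdom h
  ⟨I p, p, hp, hpT, rfl⟩

theorem sInf_conicValues_smul_le (hI : ∀ p ∈ P, 0 ≤ I p) (hdom : ∀ h, ∃ p ∈ P, p - h ∈ T)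
    {c : ℝ} (hc : 0 < c) (x : E) :
    sInf (conicValues P T I (c • x)) ≤ c * sInf (conicValues P T I x) := by
  rw [← inv_mul_le_iff₀ hc]
  refine le_csInf (nonempty_conicValues hdom x) ?_
  rintro _ ⟨p, hp, hpT, rfl⟩
  rw [inv_mul_le_iff₀ hc]
  refine csInf_le (bddBelow_conicValues hI _) ⟨c • p, P.smul_mem hc.le hp, ?_, by simp⟩
  rw [← smul_sub]
  exact T.smul_mem hc.le hpT

theorem sInf_conicValues_smul (hI : ∀ p ∈ P, 0 ≤ I p) (hdom : ∀ h, ∃ p ∈ P, p - h ∈ T)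
    {c : ℝ} (hc : 0 < c) (x : E) :
    sInf (conicValues P T I (c • x)) = c * sInf (conicValues P T I x) := by
  refine le_antisymm (sInf_conicValues_smul_le hI hdom hc x) ?_
  have := sInf_conicValues_smul_le hI hdom (inv_pos.2 hc) (c • x)
  rwa [inv_smul_smul₀ hc.ne', le_inv_mul_iff₀ hc] at this

theorem sInf_conicValues_add_le (hI : ∀ p ∈ P, 0 ≤ I p) (hdom : ∀ h, ∃ p ∈ P, p - h ∈ T)
    (x y : E) :
    sInf (conicValues P T I (x + y)) ≤
      sInf (conicValues P T I x) + sInf (conicValues P T I y) := by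
  rw [← csInf_add (nonempty_conicValues hdom x) (bddBelow_conicValues hI x)
    (nonempty_conicValues hdom y) (bddBelow_conicValues hI y)]
  refine csInf_le_csInf (bddBelow_conicValues hI _)
    ((nonempty_conicValues hdom x).add (nonempty_conicValues hdom y)) ?_
  rintro _ ⟨_, ⟨p, hp, hpT, rfl⟩, _, ⟨q, hq, hqT, rfl⟩, rfl⟩
  refine ⟨p + q, P.add_mem hp hq, ?_, (map_add I p q).symm⟩
  rw [← sub_add_sub_comm]
  exact T.add_mem hpT hqT

theorem exists_linearMap_eq_sInf_conicValues (hI : ∀ p ∈ P, 0 ≤ I p)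
    (hdom : ∀ h, ∃ p ∈ P, p - h ∈ T) (e : E) :
    ∃ L : E →ₗ[ℝ] ℝ, (∀ p ∈ P, L p ≤ I p) ∧ (∀ t ∈ T, 0 ≤ L t) ∧
      L e = sInf (conicValues P T I e) := by
  obtain ⟨L, hL, hLe⟩ := exists_linearMap_le_of_sublinear
    (N := fun h => sInf (conicValues P T I h)) (fun _ => sInf_conicValues_smul hI hdom)
    (sInf_conicValues_add_le hI hdom) e
  have hle : ∀ h, ∀ p ∈ P, p - h ∈ T → L h ≤ I p := fun h p hp hpT =>
    (hL h).trans (csInf_le (bddBelow_conicValues hI h) ⟨p, hp, hpT, rfl⟩)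
  refine ⟨L, fun p hp => hle p p hp (by simp), fun t ht => ?_, hLe⟩
  simpa using hle (-t) 0 P.zero_mem (by simpa using ht)

theorem exists_linearMap_eq_sInf_conicValues_of_le {W : Submodule ℝ E}
    (hP : P ≤ PointedCone.ofSubmodule W) (hI : ∀ p ∈ P, 0 ≤ I p)
    (hdom : ∀ h ∈ W, ∃ p ∈ P, p - h ∈ T) {e : E} (he : e ∈ W) :
    ∃ L : E →ₗ[ℝ] ℝ, (∀ p ∈ P, L p ≤ I p) ∧ (∀ t ∈ T, t ∈ W → 0 ≤ L t) ∧
      L e = sInf (conicValues P T I e) := by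
  obtain ⟨L, hLP, hLT, hLe⟩ := exists_linearMap_eq_sInf_conicValues
    (P := P.comap W.subtype) (T := T.comap W.subtype) (I := I.comp W.subtype)
    (fun p hp => hI p hp)
    (fun h => let ⟨p, hp, hpT⟩ := hdom h h.2; ⟨⟨p, hP hp⟩, hp, hpT⟩) ⟨e, he⟩
  obtain ⟨L', hL'⟩ := L.exists_extend
  have hext : ∀ w (hw : w ∈ W), L' w = L ⟨w, hw⟩ := fun w hw => LinearMap.congr_fun hL' ⟨w, hw⟩
  refine ⟨L', fun p hp => ?_, fun t ht htW => ?_, ?_⟩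
  · exact (hext p (hP hp)).trans_le (hLP ⟨p, hP hp⟩ hp)
  · exact (hLT ⟨t, htW⟩ ht).trans_eq (hext t htW).symm
  · rw [hext e he, hLe]
    congr 1
    ext r
    exact ⟨fun ⟨p, hp, hpT, hr⟩ => ⟨p, hp, hpT, hr⟩,
      fun ⟨p, hp, hpT, hr⟩ => ⟨⟨p, hP hp⟩, hp, hpT, hr⟩⟩

end ConicDuality

section Riesz

variable {n : ℕ}

/-- The Riesz functional `riesz u`, bundled as a linear map. -/
noncomputable def rieszLinear (u : (Fin n →₀ ℕ) → ℝ) : MvPolynomial (Fin n) ℝ →ₗ[ℝ] ℝ :=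
  (basisMonomials (Fin n) ℝ).constr ℝ u

theorem riesz_eq_rieszLinear (u : (Fin n →₀ ℕ) → ℝ) (p : MvPolynomial (Fin n) ℝ) :
    riesz u p = rieszLinear u p :=
  ((basisMonomials (Fin n) ℝ).constr_apply ℝ u p).symm

theorem rieszLinear_monomial (u : (Fin n →₀ ℕ) → ℝ) (α : Fin n →₀ ℕ) :
    rieszLinear u (monomial α 1) = u α := by
  simpa only [rieszLinear, coe_basisMonomials] using (basisMonomials (Fin n) ℝ).constr_basis ℝ u α

theorem riesz_one (u : (Fin n →₀ ℕ) → ℝ) : riesz u 1 = u 0 := by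
  rw [riesz_eq_rieszLinear]
  exact rieszLinear_monomial u 0

theorem linearMap_eq_of_monomial_eq {L L' : MvPolynomial (Fin n) ℝ →ₗ[ℝ] ℝ} {N : ℕ}
    (h : ∀ α, fdeg α ≤ N → L (monomial α 1) = L' (monomial α 1))
    {p : MvPolynomial (Fin n) ℝ} (hp : p.totalDegree ≤ N) : L p = L' p := by
  rw [p.as_sum, map_sum, map_sum]
  refine Finset.sum_congr rfl fun α hα => ?_
  rw [← mul_one (coeff α p), ← smul_eq_mul, ← smul_monomial, map_smul, map_smul,
    h α ((le_totalDegree hα).trans hp)]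

theorem riesz_linearMap_monomial (L : MvPolynomial (Fin n) ℝ →ₗ[ℝ] ℝ)
    (p : MvPolynomial (Fin n) ℝ) : riesz (fun α => L (monomial α 1)) p = L p := by
  rw [riesz_eq_rieszLinear]
  exact linearMap_eq_of_monomial_eq (fun α _ => rieszLinear_monomial _ α) le_rfl

end Riesz

section SumsOfSquares

theorem eval_sq_nonneg {σ : Type*} (x : σ → ℝ) (p : MvPolynomial σ ℝ) : 0 ≤ eval x (p ^ 2) := by
  rw [map_pow]
  exact sq_nonneg _

variable {n m d e : ℕ} {p q : MvPolynomial (Fin n) ℝ} {g : Fin m → MvPolynomial (Fin n) ℝ}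

theorem IsSOS.zero (d : ℕ) : IsSOS d (0 : MvPolynomial (Fin n) ℝ) :=
  ⟨0, Fin.elim0, fun i => i.elim0, by simp⟩

theorem IsSOS.sq (hp : p.totalDegree ≤ d) : IsSOS d (p ^ 2) :=
  ⟨1, fun _ => p, fun _ => hp, by simp⟩

theorem IsSOS.add (hp : IsSOS d p) (hq : IsSOS d q) : IsSOS d (p + q) := by
  obtain ⟨k, a, ha, rfl⟩ := hp
  obtain ⟨l, b, hb, rfl⟩ := hq
  refine ⟨k + l, Fin.append a b, fun i => ?_, by simp [Fin.sum_univ_add]⟩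
  induction i using Fin.addCases with
  | left i => simpa using ha i
  | right i => simpa using hb i

theorem IsSOS.smul {c : ℝ} (hc : 0 ≤ c) (hp : IsSOS d p) : IsSOS d (c • p) := by
  obtain ⟨k, a, ha, rfl⟩ := hp
  refine ⟨k, fun i => √c • a i, fun i => (totalDegree_smul_le _ _).trans (ha i), ?_⟩
  simp_rw [Finset.smul_sum, smul_pow, Real.sq_sqrt hc]

theorem IsSOS.mono (h : d ≤ e) (hp : IsSOS d p) : IsSOS e p := by
  obtain ⟨k, a, ha, rfl⟩ := hp
  exact ⟨k, a, fun i => (ha i).trans h, rfl⟩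

theorem IsSOS.totalDegree_le (hp : IsSOS d p) : p.totalDegree ≤ 2 * d := by
  obtain ⟨k, a, ha, rfl⟩ := hp
  exact totalDegree_finsetSum_le fun i _ =>
    (totalDegree_pow _ _).trans (Nat.mul_le_mul_left 2 (ha i))

theorem IsSOS.map_mul_nonneg (hp : IsSOS d p) {L : MvPolynomial (Fin n) ℝ →ₗ[ℝ] ℝ}
    (hL : ∀ r, r.totalDegree ≤ d → 0 ≤ L (q * r ^ 2)) : 0 ≤ L (p * q) := by
  obtain ⟨k, a, ha, rfl⟩ := hp
  rw [Finset.sum_mul, map_sum]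
  exact Finset.sum_nonneg fun i _ => mul_comm q _ ▸ hL _ (ha i)

theorem IsSOS.map_nonneg (hp : IsSOS d p) {L : MvPolynomial (Fin n) ℝ →ₗ[ℝ] ℝ}
    (hL : ∀ r, r.totalDegree ≤ d → 0 ≤ L (r ^ 2)) : 0 ≤ L p := by
  simpa using hp.map_mul_nonneg (q := 1) (by simpa using hL)

theorem InQM.of_isSOS (g : Fin m → MvPolynomial (Fin n) ℝ) (hp : IsSOS d p) : InQM g d p :=
  ⟨p, 0, hp, fun _ => IsSOS.zero _, by simp⟩

theorem InQM.mul_sq (g : Fin m → MvPolynomial (Fin n) ℝ) (j : Fin m)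
    (hp : p.totalDegree ≤ d - dHalf (g j)) : InQM g d (g j * p ^ 2) := by
  refine ⟨0, Pi.single j (p ^ 2), IsSOS.zero d, fun i => ?_, ?_⟩
  · obtain rfl | hij := eq_or_ne i j
    · simpa using IsSOS.sq hp
    · simpa [hij] using IsSOS.zero _
  · simp [Pi.single_apply, mul_comm]

theorem InQM.add (hp : InQM g d p) (hq : InQM g d q) : InQM g d (p + q) := by
  obtain ⟨a, s, ha, hs, rfl⟩ := hp
  obtain ⟨b, t, hb, ht, rfl⟩ := hq
  refine ⟨a + b, s + t, ha.add hb, fun j => (hs j).add (ht j), ?_⟩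
  simp only [Pi.add_apply, add_mul, Finset.sum_add_distrib]
  ring

theorem InQM.smul {c : ℝ} (hc : 0 ≤ c) (hp : InQM g d p) : InQM g d (c • p) := by
  obtain ⟨a, s, ha, hs, rfl⟩ := hp
  refine ⟨c • a, c • s, ha.smul hc, fun j => (hs j).smul hc, ?_⟩
  simp only [smul_add, Finset.smul_sum, Pi.smul_apply, smul_mul_assoc]

theorem InQM.mono (h : d ≤ e) (hp : InQM g d p) : InQM g e p := by
  obtain ⟨a, s, ha, hs, rfl⟩ := hp
  exact ⟨a, s, ha.mono h, fun j => (hs j).mono (Nat.sub_le_sub_right h _), rfl⟩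

theorem InQM.map_nonneg (hp : InQM g d p) {L : MvPolynomial (Fin n) ℝ →ₗ[ℝ] ℝ}
    (hL : ∀ r, r.totalDegree ≤ d → 0 ≤ L (r ^ 2))
    (hLg : ∀ j r, r.totalDegree ≤ d - dHalf (g j) → 0 ≤ L (g j * r ^ 2)) : 0 ≤ L p := by
  obtain ⟨a, s, ha, hs, rfl⟩ := hp
  rw [map_add, map_sum]
  exact add_nonneg (ha.map_nonneg hL) (Finset.sum_nonneg fun j _ => (hs j).map_mul_nonneg (hLg j))

theorem totalDegree_mul_sq_le {q : MvPolynomial (Fin n) ℝ} (hq : dHalf q ≤ d)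
    (hp : p.totalDegree ≤ d - dHalf q) : (q * p ^ 2).totalDegree ≤ 2 * d := by
  have hmul := totalDegree_mul q (p ^ 2)
  have hpow := totalDegree_pow p 2
  unfold dHalf at hq hp
  lia

/-- The convex cone `Σ[x]_d` of sums of squares of polynomials of degree at most `d`. -/
def sosCone (n d : ℕ) : PointedCone ℝ (MvPolynomial (Fin n) ℝ) where
  carrier := {p | IsSOS d p}
  add_mem' := IsSOS.add
  zero_mem' := IsSOS.zero d
  smul_mem' c _ := IsSOS.smul c.2

/-- The truncated quadratic module `Q_{2d}(Ω)` as a convex cone. -/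
def qmCone (g : Fin m → MvPolynomial (Fin n) ℝ) (d : ℕ) :
    PointedCone ℝ (MvPolynomial (Fin n) ℝ) where
  carrier := {p | InQM g d p}
  add_mem' := InQM.add
  zero_mem' := InQM.of_isSOS g (IsSOS.zero d)
  smul_mem' c _ := InQM.smul c.2

theorem sosCone_mono (n : ℕ) : Monotone (sosCone n) := fun _ _ h _ => IsSOS.mono h

theorem qmCone_mono (g : Fin m → MvPolynomial (Fin n) ℝ) : Monotone (qmCone g) :=
  fun _ _ h _ => InQM.mono h

theorem mem_iSup_sosCone : p ∈ ⨆ d, sosCone n d ↔ ∃ d, IsSOS d p :=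
  Submodule.mem_iSup_of_directed _ (sosCone_mono n).directed_le

theorem mem_iSup_qmCone : p ∈ ⨆ d, qmCone g d ↔ ∃ d, InQM g d p :=
  Submodule.mem_iSup_of_directed _ (qmCone_mono g).directed_le

theorem exists_add_eq_fdeg_le (α : Fin n →₀ ℕ) (h : fdeg α ≤ 2 * d) :
    ∃ β γ : Fin n →₀ ℕ, β + γ = α ∧ fdeg β ≤ d ∧ fdeg γ ≤ d := by
  obtain ⟨β, hβα, hβ⟩ := Finsupp.exists_le_degree_eq α (min d α.degree) (min_le_right _ _)
  have hsum : β + (α - β) = α := add_tsub_cancel_of_le hβα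
  have hdeg := congrArg Finsupp.degree hsum
  rw [map_add] at hdeg
  change α.degree ≤ 2 * d at h
  refine ⟨β, α - β, hsum, ?_, ?_⟩
  · change β.degree ≤ d
    lia
  · change (α - β).degree ≤ d
    lia

-- Polarization: `b * c = ((b + c) / 2) ^ 2 - ((b - c) / 2) ^ 2`.
theorem exists_mul_eq_isSOS_sub_isSOS (hp : p.totalDegree ≤ d) (hq : q.totalDegree ≤ d) :
    ∃ s t, IsSOS d s ∧ IsSOS d t ∧ p * q = s - t := by
  refine ⟨((1 / 2 : ℝ) • (p + q)) ^ 2, ((1 / 2 : ℝ) • (p - q)) ^ 2, IsSOS.sq ?_, IsSOS.sq ?_, ?_⟩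
  · exact (totalDegree_smul_le _ _).trans ((totalDegree_add _ _).trans (max_le hp hq))
  · exact (totalDegree_smul_le _ _).trans ((totalDegree_sub _ _).trans (max_le hp hq))
  · simp only [smul_pow, add_sq, sub_sq, two_mul, add_mul]
    module

theorem exists_eq_isSOS_sub_isSOS (hp : p.totalDegree ≤ 2 * d) :
    ∃ s t, IsSOS d s ∧ IsSOS d t ∧ p = s - t := by
  rw [p.as_sum]
  refine Finset.sum_induction _ (fun h => ∃ s t, IsSOS d s ∧ IsSOS d t ∧ h = s - t) ?_ ?_ ?_
  · rintro _ _ ⟨s, t, hs, ht, hst⟩ ⟨s', t', hs', ht', hst'⟩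
    exact ⟨s + s', t + t', hs.add hs', ht.add ht', by rw [hst, hst']; ring⟩
  · exact ⟨0, 0, IsSOS.zero d, IsSOS.zero d, (sub_zero 0).symm⟩
  · intro α hα
    obtain ⟨β, γ, rfl, hβ, hγ⟩ := exists_add_eq_fdeg_le α ((le_totalDegree hα).trans hp)
    obtain ⟨s, t, h⟩ := exists_mul_eq_isSOS_sub_isSOS (p := monomial β (coeff (β + γ) p))
      (q := monomial γ 1) ((totalDegree_monomial_le _ _).trans hβ)
      ((totalDegree_monomial_le _ _).trans hγ)
    rw [monomial_mul, mul_one] at h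
    exact ⟨s, t, h⟩

end SumsOfSquares

section WithDensity

variable {X : Type*} [MeasurableSpace X] {μ : Measure X} {ρ F : X → ℝ}

theorem integrable_withDensity_ofReal_iff (hρ : AEMeasurable ρ μ) (hρ0 : 0 ≤ ρ) :
    Integrable F (μ.withDensity fun x => ENNReal.ofReal (ρ x)) ↔
      Integrable (fun x => ρ x * F x) μ := by
  rw [integrable_withDensity_iff_integrable_smul₀' hρ.ennreal_ofReal
    (ae_of_all _ fun _ => ENNReal.ofReal_lt_top)]
  simp only [ENNReal.toReal_ofReal (hρ0 _), smul_eq_mul]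

theorem integral_withDensity_ofReal (hρ : AEMeasurable ρ μ) (hρ0 : 0 ≤ ρ) :
    ∫ x, F x ∂μ.withDensity (fun x => ENNReal.ofReal (ρ x)) = ∫ x, ρ x * F x ∂μ := by
  rw [integral_withDensity_eq_integral_toReal_smul₀ hρ.ennreal_ofReal
    (ae_of_all _ fun _ => ENNReal.ofReal_lt_top)]
  simp only [ENNReal.toReal_ofReal (hρ0 _), smul_eq_mul]

end WithDensity

section ExponentialMoments

variable {ι : Type*} [Fintype ι] {ν : Measure (ι → ℝ)} {h k : (ι → ℝ) → ℝ}

/-- The exponential weight `exp (c * ‖x‖₁)`, which dominates every polynomial for large `c`. -/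
noncomputable def expWeight (c : ℝ) (x : ι → ℝ) : ℝ := Real.exp (c * ∑ i, |x i|)

theorem continuous_expWeight (c : ℝ) : Continuous (expWeight (ι := ι) c) := by
  unfold expWeight
  fun_prop

theorem expWeight_pos (c : ℝ) (x : ι → ℝ) : 0 < expWeight c x := Real.exp_pos _

theorem expWeight_zero (x : ι → ℝ) : expWeight 0 x = 1 := by simp [expWeight]

theorem expWeight_add (c d : ℝ) (x : ι → ℝ) :
    expWeight (c + d) x = expWeight c x * expWeight d x := by
  rw [expWeight, add_mul, Real.exp_add]
  rfl

theorem expWeight_le_expWeight {c d : ℝ} (hcd : c ≤ d) (x : ι → ℝ) :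
    expWeight c x ≤ expWeight d x :=
  Real.exp_le_exp.2 (mul_le_mul_of_nonneg_right hcd (Finset.sum_nonneg fun _ _ => abs_nonneg _))

theorem abs_apply_le_expWeight (x : ι → ℝ) (i : ι) : |x i| ≤ expWeight 1 x := by
  have hsum : |x i| ≤ ∑ j, |x j| :=
    Finset.single_le_sum (f := fun j => |x j|) (fun _ _ => abs_nonneg _) (Finset.mem_univ i)
  have hexp := Real.add_one_le_exp (∑ j, |x j|)
  rw [expWeight, one_mul]
  linarith

theorem exists_abs_eval_le_mul_expWeight (p : MvPolynomial ι ℝ) :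
    ∃ C c : ℝ, 0 ≤ C ∧ 0 ≤ c ∧ ∀ x, |eval x p| ≤ C * expWeight c x := by
  induction p using MvPolynomial.induction_on with
  | C a => exact ⟨|a|, 0, abs_nonneg _, le_rfl, fun x => by simp [expWeight_zero]⟩
  | add p q hp hq =>
    obtain ⟨C, c, hC, hc, hpC⟩ := hp
    obtain ⟨D, d, hD, hd, hqD⟩ := hq
    refine ⟨C + D, c + d, by positivity, by positivity, fun x => ?_⟩
    rw [map_add, add_mul]
    refine (abs_add_le _ _).trans (add_le_add ((hpC x).trans ?_) ((hqD x).trans ?_))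
    · exact mul_le_mul_of_nonneg_left (expWeight_le_expWeight (by linarith) x) hC
    · exact mul_le_mul_of_nonneg_left (expWeight_le_expWeight (by linarith) x) hD
  | mul_X p i hp =>
    obtain ⟨C, c, hC, hc, hpC⟩ := hp
    refine ⟨C, c + 1, hC, by positivity, fun x => ?_⟩
    rw [map_mul, eval_X, abs_mul, expWeight_add, ← mul_assoc]
    exact mul_le_mul (hpC x) (abs_apply_le_expWeight x i) (abs_nonneg _)
      (mul_nonneg hC (expWeight_pos c x).le)

/-- Measures on `ℝ^ι` all of whose exponential moments are finite. -/
class HasExpMoments (ν : Measure (ι → ℝ)) : Prop where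
  integrable_expWeight : ∀ c, Integrable (expWeight c) ν

/-- Functions that are `ν`-integrable against every exponential weight. -/
def ExpIntegrable (h : (ι → ℝ) → ℝ) (ν : Measure (ι → ℝ)) : Prop :=
  ∀ c, Integrable (fun x => h x * expWeight c x) ν

theorem ExpIntegrable.integrable (hh : ExpIntegrable h ν) : Integrable h ν := by
  simpa only [expWeight_zero, mul_one] using hh 0

theorem ExpIntegrable.sub (hh : ExpIntegrable h ν) (hk : ExpIntegrable k ν) :
    ExpIntegrable (fun x => h x - k x) ν := fun c => by
  simpa only [sub_mul] using! (hh c).sub (hk c)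

theorem ExpIntegrable.mul_eval (hh : ExpIntegrable h ν) (p : MvPolynomial ι ℝ) :
    ExpIntegrable (fun x => h x * eval x p) ν := fun c => by
  obtain ⟨C, e, -, -, hpC⟩ := exists_abs_eval_le_mul_expWeight p
  refine ((hh (e + c)).norm.const_mul C).mono' ((hh.integrable.aestronglyMeasurable.mul
    (continuous_eval p).aestronglyMeasurable).mul (continuous_expWeight c).aestronglyMeasurable)
    (ae_of_all _ fun x => ?_)
  have hc := (expWeight_pos c x).le
  calc ‖h x * eval x p * expWeight c x‖ = |h x| * |eval x p| * expWeight c x := by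
        rw [norm_mul, norm_mul, Real.norm_of_nonneg hc, Real.norm_eq_abs, Real.norm_eq_abs]
    _ ≤ |h x| * (C * expWeight e x) * expWeight c x := by gcongr; exact hpC x
    _ = C * ‖h x * expWeight (e + c) x‖ := by
        rw [norm_mul, Real.norm_of_nonneg (expWeight_pos _ x).le, Real.norm_eq_abs, expWeight_add]
        ring

theorem ExpIntegrable.hasExpMoments_withDensity_abs (hh : ExpIntegrable h ν) :
    HasExpMoments (ν.withDensity fun x => ENNReal.ofReal |h x|) := by
  refine ⟨fun c => ?_⟩
  rw [integrable_withDensity_ofReal_iff hh.integrable.aemeasurable.abs fun _ => abs_nonneg _]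
  simpa only [norm_mul, Real.norm_eq_abs, abs_of_pos (expWeight_pos c _)] using (hh c).norm

instance HasExpMoments.restrict [HasExpMoments ν] (s : Set (ι → ℝ)) :
    HasExpMoments (ν.restrict s) :=
  ⟨fun c => (integrable_expWeight c).restrict⟩

variable [HasExpMoments ν]

instance (priority := 100) HasExpMoments.isFiniteMeasure : IsFiniteMeasure ν := by
  have hone : Integrable (fun _ => (1 : ℝ)) ν := by
    simpa only [_root_.funext expWeight_zero] using HasExpMoments.integrable_expWeight (ν := ν) 0
  simpa [integrable_const_iff] using hone

theorem memLp_two_expWeight (c : ℝ) : MemLp (expWeight c) 2 ν := by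
  rw [memLp_two_iff_integrable_sq (continuous_expWeight c).aestronglyMeasurable]
  simpa only [pow_two, ← expWeight_add] using HasExpMoments.integrable_expWeight (c + c)

theorem ExpIntegrable.of_memLp_two (hh : MemLp h 2 ν) : ExpIntegrable h ν := fun c =>
  hh.integrable_mul (memLp_two_expWeight c)

theorem expIntegrable_one : ExpIntegrable (fun _ => 1) ν := .of_memLp_two (memLp_const 1)

theorem integrable_mvPolynomial (p : MvPolynomial ι ℝ) : Integrable (fun x => eval x p) ν := by
  simpa only [one_mul] using (expIntegrable_one.mul_eval p).integrable

theorem memLp_two_mvPolynomial (p : MvPolynomial ι ℝ) : MemLp (fun x => eval x p) 2 ν := by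
  rw [memLp_two_iff_integrable_sq (continuous_eval p).aestronglyMeasurable]
  exact (integrable_mvPolynomial (p ^ 2)).congr (ae_of_all _ fun x => map_pow (eval x) p 2)

variable (ν) in
/-- Integration of polynomials against `ν`, as a linear map. -/
noncomputable def polyIntegral : MvPolynomial ι ℝ →ₗ[ℝ] ℝ where
  toFun p := ∫ x, eval x p ∂ν
  map_add' p q := by
    simpa only [map_add] using integral_add (integrable_mvPolynomial p) (integrable_mvPolynomial q)
  map_smul' c p := by
    simpa only [smul_eval] using! integral_const_mul c _

theorem polyIntegral_apply (p : MvPolynomial ι ℝ) : polyIntegral ν p = ∫ x, eval x p ∂ν := rfl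

variable (ν) in
theorem polyIntegral_sq_nonneg (p : MvPolynomial ι ℝ) : 0 ≤ polyIntegral ν (p ^ 2) :=
  integral_nonneg fun x => eval_sq_nonneg x p

end ExponentialMoments

section Gaussian

variable {n : ℕ}

/-- The Lebesgue density of `gaussianMeasure n`. -/
noncomputable def gaussianDensity (n : ℕ) (x : Fin n → ℝ) : ℝ :=
  (2 * Real.pi) ^ (-(n : ℝ) / 2) * Real.exp (-(∑ i, x i ^ 2) / 2)

theorem continuous_gaussianDensity (n : ℕ) : Continuous (gaussianDensity n) := by
  unfold gaussianDensity
  fun_prop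

theorem gaussianDensity_nonneg (n : ℕ) : 0 ≤ gaussianDensity n := fun x => by
  unfold gaussianDensity
  positivity

theorem integrable_gaussianMeasure_iff {F : (Fin n → ℝ) → ℝ} :
    Integrable F (gaussianMeasure n) ↔ Integrable (fun x => gaussianDensity n x * F x) :=
  integrable_withDensity_ofReal_iff (continuous_gaussianDensity n).aemeasurable
    (gaussianDensity_nonneg n)

theorem integral_gaussianMeasure (F : (Fin n → ℝ) → ℝ) :
    ∫ x, F x ∂gaussianMeasure n = ∫ x, gaussianDensity n x * F x :=
  integral_withDensity_ofReal (continuous_gaussianDensity n).aemeasurable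
    (gaussianDensity_nonneg n)

theorem integrable_exp_neg_sq_div_two_add_mul_abs (c : ℝ) :
    Integrable fun t : ℝ => Real.exp (-t ^ 2 / 2 + c * |t|) := by
  refine ((integrable_exp_neg_mul_sq (b := 1 / 4) (by norm_num)).const_mul
    (Real.exp (c ^ 2))).mono' (by fun_prop) (ae_of_all _ fun t => ?_)
  rw [Real.norm_of_nonneg (Real.exp_pos _).le, ← Real.exp_add, Real.exp_le_exp]
  nlinarith [sq_abs t, sq_nonneg (|t| / 2 - c)]

instance hasExpMoments_gaussianMeasure (n : ℕ) : HasExpMoments (gaussianMeasure n) := by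
  refine ⟨fun c => integrable_gaussianMeasure_iff.2 ?_⟩
  have hprod := (Integrable.fintype_prod (𝕜 := ℝ) (ι := Fin n) (E := ℝ) (μ := fun _ => volume)
    fun _ => integrable_exp_neg_sq_div_two_add_mul_abs c).const_mul
      ((2 * Real.pi) ^ (-(n : ℝ) / 2))
  refine hprod.congr (ae_of_all _ fun x => ?_)
  simp only [gaussianDensity, expWeight]
  rw [mul_assoc, ← Real.exp_add, ← Real.exp_sum, Finset.sum_add_distrib, Finset.mul_sum,
    ← Finset.sum_div, Finset.sum_neg_distrib]

theorem gmom_eq_polyIntegral (α : Fin n →₀ ℕ) :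
    gmom n α = polyIntegral (gaussianMeasure n) (monomial α 1) := by
  simp [gmom, polyIntegral_apply, eval_monomial, Finsupp.prod_fintype]

end Gaussian

section MomentDeterminacy

theorem hasSum_integral_cexp_mul_I {X : Type*} [MeasurableSpace X] {μ : Measure X} {ψ l : X → ℝ}
    (hψ : AEStronglyMeasurable ψ μ) (hl : AEStronglyMeasurable l μ)
    (hint : Integrable (fun x => |ψ x| * Real.exp |l x|) μ) :
    HasSum (fun k : ℕ => Complex.I ^ k / k.factorial * ((∫ x, ψ x * l x ^ k ∂μ : ℝ) : ℂ))
      (∫ x, Complex.exp (l x * Complex.I) * (ψ x : ℂ) ∂μ) := by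
  simp_rw [← integral_complex_ofReal, ← integral_const_mul]
  have habs : ∀ x, HasSum (fun k : ℕ => |ψ x| * (|l x| ^ k / k.factorial))
      (|ψ x| * Real.exp |l x|) := fun x => by
    rw [Real.exp_eq_exp_ℝ]
    exact (NormedSpace.expSeries_div_hasSum_exp |l x|).mul_left _
  refine hasSum_integral_of_dominated_convergence
    (fun (k : ℕ) x => |ψ x| * (|l x| ^ k / k.factorial)) (fun k => ?_)
    (fun k => ae_of_all _ fun x => le_of_eq ?_) (ae_of_all _ fun x => (habs x).summable) ?_
    (ae_of_all _ fun x => ?_)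
  · exact (Complex.continuous_ofReal.comp_aestronglyMeasurable (hψ.mul (hl.pow k))).const_mul _
  · simp only [norm_mul, norm_div, norm_pow, Complex.norm_I, one_pow, Complex.norm_real,
      Complex.norm_natCast, Real.norm_eq_abs]
    ring
  · simpa only [fun x => (habs x).tsum_eq] using hint
  · have hexp := NormedSpace.expSeries_div_hasSum_exp ((l x : ℂ) * Complex.I)
    rw [← Complex.exp_eq_exp_ℂ] at hexp
    refine (hexp.mul_right (ψ x : ℂ)).congr_fun fun k => ?_
    push_cast
    ring

theorem ae_eq_zero_of_forall_integral_cexp_mul_eq_zero {E : Type*} [NormedAddCommGroup E]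
    [NormedSpace ℝ E] [CompleteSpace E] [SecondCountableTopology E] [MeasurableSpace E]
    [BorelSpace E] {ν : Measure E} [SigmaFinite ν] {ψ : E → ℝ} (hψ : Integrable ψ ν)
    (h : ∀ Λ : StrongDual ℝ E, ∫ x, Complex.exp (Λ x * Complex.I) * (ψ x : ℂ) ∂ν = 0) :
    ψ =ᵐ[ν] 0 := by
  have hpos := hψ.aemeasurable.ennreal_ofReal
  have hneg : AEMeasurable (fun x => ENNReal.ofReal (-ψ x)) ν :=
    hψ.aemeasurable.neg.ennreal_ofReal
  have : IsFiniteMeasure (ν.withDensity fun x => ENNReal.ofReal (ψ x)) :=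
    isFiniteMeasure_withDensity_ofReal hψ.2
  have : IsFiniteMeasure (ν.withDensity fun x => ENNReal.ofReal (-ψ x)) :=
    isFiniteMeasure_withDensity_ofReal hψ.neg.2
  have hexp : ∀ (Λ : StrongDual ℝ E) {φ : E → ℝ}, Integrable φ ν →
      Integrable (fun x => φ x • Complex.exp (Λ x * Complex.I)) ν := fun Λ φ hφ =>
    hφ.norm.mono' (hφ.aestronglyMeasurable.smul (by fun_prop)) (ae_of_all _ fun x => by
      rw [norm_smul, Complex.norm_exp_ofReal_mul_I, mul_one])
  have heq : ν.withDensity (fun x => ENNReal.ofReal (ψ x)) =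
      ν.withDensity (fun x => ENNReal.ofReal (-ψ x)) := by
    refine Measure.ext_of_charFunDual (_root_.funext fun Λ => ?_)
    rw [charFunDual_apply, charFunDual_apply,
      integral_withDensity_eq_integral_toReal_smul₀ hpos
        (ae_of_all _ fun _ => ENNReal.ofReal_lt_top),
      integral_withDensity_eq_integral_toReal_smul₀ hneg
        (ae_of_all _ fun _ => ENNReal.ofReal_lt_top), ← sub_eq_zero, ← integral_sub, ← h Λ]
    · refine integral_congr_ae (ae_of_all _ fun x => ?_)
      beta_reduce
      rw [← sub_smul, ENNReal.toReal_ofReal', ENNReal.toReal_ofReal', max_zero_sub_eq_self,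
        Complex.real_smul, mul_comm]
    · exact hexp Λ (by simpa only [ENNReal.toReal_ofReal'] using hψ.pos_part)
    · exact hexp Λ (by simpa only [ENNReal.toReal_ofReal'] using hψ.neg_part)
  filter_upwards [(withDensity_eq_iff_of_sigmaFinite hpos hneg).1 heq] with x hx
  have hx := congrArg ENNReal.toReal hx
  rw [ENNReal.toReal_ofReal', ENNReal.toReal_ofReal', ← sub_eq_zero,
    max_zero_sub_eq_self] at hx
  exact hx

theorem exists_mvPolynomial_eval_eq_dual {ι : Type*} [Finite ι] (Λ : StrongDual ℝ (ι → ℝ)) :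
    ∃ p : MvPolynomial ι ℝ, ∀ x, eval x p = Λ x := by
  classical
  have := Fintype.ofFinite ι
  refine ⟨∑ i, C (Λ (Pi.single i 1)) * X i, fun x => ?_⟩
  conv_rhs => rw [pi_eq_sum_univ' x, map_sum]
  simp only [map_sum, map_mul, eval_C, eval_X, map_smul, smul_eq_mul, mul_comm]

variable {ι : Type*} [Fintype ι] {ν : Measure (ι → ℝ)} {ψ : (ι → ℝ) → ℝ}

theorem abs_dual_apply_le (Λ : StrongDual ℝ (ι → ℝ)) (x : ι → ℝ) :
    |Λ x| ≤ ‖Λ‖ * ∑ i, |x i| := by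
  refine (Λ.le_opNorm x).trans (mul_le_mul_of_nonneg_left ?_ (norm_nonneg _))
  refine (pi_norm_le_iff_of_nonneg (Finset.sum_nonneg fun _ _ => abs_nonneg _)).2 fun i => ?_
  exact Finset.single_le_sum (f := fun i => |x i|) (fun _ _ => abs_nonneg _) (Finset.mem_univ i)

theorem ExpIntegrable.integrable_abs_mul_exp_abs_dual (hψ : ExpIntegrable ψ ν)
    (Λ : StrongDual ℝ (ι → ℝ)) : Integrable (fun x => |ψ x| * Real.exp |Λ x|) ν := by
  refine (hψ ‖Λ‖).norm.mono' (hψ.integrable.aestronglyMeasurable.norm.mul (by fun_prop))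
    (ae_of_all _ fun x => ?_)
  rw [norm_mul, norm_mul, Real.norm_of_nonneg (Real.exp_pos _).le,
    Real.norm_of_nonneg (expWeight_pos _ _).le, Real.norm_eq_abs, Real.norm_eq_abs, abs_abs]
  exact mul_le_mul_of_nonneg_left (Real.exp_le_exp.2 (abs_dual_apply_le Λ x)) (abs_nonneg _)

theorem ExpIntegrable.ae_eq_zero_of_forall_integral_mul_eval_eq_zero [SigmaFinite ν]
    (hψ : ExpIntegrable ψ ν) (h : ∀ p : MvPolynomial ι ℝ, ∫ x, ψ x * eval x p ∂ν = 0) :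
    ψ =ᵐ[ν] 0 := by
  refine ae_eq_zero_of_forall_integral_cexp_mul_eq_zero hψ.integrable fun Λ => ?_
  obtain ⟨l, hl⟩ := exists_mvPolynomial_eval_eq_dual Λ
  have hmoment : ∀ k : ℕ, ∫ x, ψ x * Λ x ^ k ∂ν = 0 := fun k => by
    simpa only [map_pow, hl] using h (l ^ k)
  have hsum := hasSum_integral_cexp_mul_I hψ.integrable.aestronglyMeasurable
    (by fun_prop) (hψ.integrable_abs_mul_exp_abs_dual Λ)
  simp only [hmoment, Complex.ofReal_zero, mul_zero] at hsum
  exact hsum.unique hasSum_zero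

end MomentDeterminacy

section PolynomialDensity

variable {ι : Type*} [Fintype ι] {ν : Measure (ι → ℝ)} [HasExpMoments ν]

variable (ν) in
/-- Polynomials as elements of `L²(ν)`. -/
noncomputable def polyLp : MvPolynomial ι ℝ →ₗ[ℝ] Lp ℝ 2 ν where
  toFun p := (memLp_two_mvPolynomial p).toLp _
  map_add' p q := by
    rw [← MemLp.toLp_add]
    congr 1
    ext x
    simp
  map_smul' c p := by
    rw [RingHom.id_apply, ← MemLp.toLp_const_smul]
    congr 1
    ext x
    simp [smul_eval]

theorem coeFn_polyLp (p : MvPolynomial ι ℝ) : polyLp ν p =ᵐ[ν] fun x => eval x p :=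
  (memLp_two_mvPolynomial p).coeFn_toLp

theorem inner_polyLp (h : Lp ℝ 2 ν) (p : MvPolynomial ι ℝ) :
    inner ℝ h (polyLp ν p) = ∫ x, h x * eval x p ∂ν := by
  rw [L2.inner_def]
  refine integral_congr_ae ?_
  filter_upwards [coeFn_polyLp (ν := ν) p] with x hx
  rw [hx, RCLike.inner_apply, conj_trivial, mul_comm]

theorem norm_polyLp_sq (p : MvPolynomial ι ℝ) :
    ‖polyLp ν p‖ ^ 2 = polyIntegral ν (p ^ 2) := by
  rw [← real_inner_self_eq_norm_sq, inner_polyLp, polyIntegral_apply]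
  refine integral_congr_ae ?_
  filter_upwards [coeFn_polyLp (ν := ν) p] with x hx
  rw [hx, map_pow, pow_two]

theorem topologicalClosure_range_polyLp : (polyLp ν).range.topologicalClosure = ⊤ := by
  rw [Submodule.topologicalClosure_eq_top_iff, Submodule.eq_bot_iff]
  intro h hh
  have horth : ∀ p : MvPolynomial ι ℝ, ∫ x, h x * eval x p ∂ν = 0 := fun p => by
    rw [← inner_polyLp]
    exact (Submodule.mem_orthogonal' _ _).1 hh _ ⟨p, rfl⟩
  exact Lp.eq_zero_iff_ae_eq_zero.2
    ((ExpIntegrable.of_memLp_two (Lp.memLp h)).ae_eq_zero_of_forall_integral_mul_eval_eq_zero horth)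

theorem exists_integral_sq_eval_sub_lt {φ : (ι → ℝ) → ℝ} (hφ : MemLp φ 2 ν) {ε : ℝ}
    (hε : 0 < ε) : ∃ p : MvPolynomial ι ℝ, ∫ x, (eval x p - φ x) ^ 2 ∂ν < ε := by
  have hcl : hφ.toLp ∈ closure ((polyLp ν).range : Set (Lp ℝ 2 ν)) := by
    rw [← Submodule.topologicalClosure_coe, topologicalClosure_range_polyLp]
    trivial
  obtain ⟨_, ⟨p, rfl⟩, hp⟩ := Metric.mem_closure_iff.1 hcl (√ε) (Real.sqrt_pos.2 hε)
  refine ⟨p, ?_⟩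
  rw [dist_comm, dist_eq_norm, Real.lt_sqrt (norm_nonneg _), ← real_inner_self_eq_norm_sq,
    L2.inner_def] at hp
  refine lt_of_eq_of_lt (integral_congr_ae ?_) hp
  filter_upwards [coeFn_polyLp (ν := ν) p, hφ.coeFn_toLp, Lp.coeFn_sub (polyLp ν p) hφ.toLp]
    with x hpx hφx hsub
  rw [hsub, Pi.sub_apply, hpx, hφx, real_inner_self_eq_norm_sq, Real.norm_eq_abs, sq_abs]

end PolynomialDensity

section Nonnegativity

variable {ι : Type*} [Fintype ι] {μ : Measure (ι → ℝ)} {h : (ι → ℝ) → ℝ}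

-- With `c = h x` and `p ^ 2` approximating the indicator of `{h < 0}` in `L²(|h| μ)`, integration
-- bounds the mass of the negative part of `h`.
theorem max_neg_zero_le (c p : ℝ) :
    max (-c) 0 ≤ -2 * (c * p ^ 2) + 2 * (|c| * (p - (Set.Iio 0).indicator 1 c) ^ 2) := by
  rcases lt_or_ge c 0 with hc | hc
  · rw [Set.indicator_of_mem (Set.mem_Iio.2 hc), Pi.one_apply, abs_of_neg hc,
      max_eq_left (neg_nonneg.2 hc.le)]
    nlinarith [mul_nonneg (neg_nonneg.2 hc.le) (sq_nonneg (2 * p - 1))]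
  · rw [Set.indicator_of_notMem (Set.notMem_Iio.2 hc), abs_of_nonneg hc,
      max_eq_right (neg_nonpos.2 hc)]
    nlinarith

theorem ExpIntegrable.memLp_two_indicator_Iio (hh : ExpIntegrable h μ) :
    MemLp (fun x => (Set.Iio 0).indicator (1 : ℝ → ℝ) (h x)) 2
      (μ.withDensity fun x => ENNReal.ofReal |h x|) := by
  have := hh.hasExpMoments_withDensity_abs
  have hmeas : AEMeasurable h (μ.withDensity fun x => ENNReal.ofReal |h x|) :=
    hh.integrable.aemeasurable.mono_ac (withDensity_absolutelyContinuous _ _)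
  refine MemLp.of_bound ((measurable_one.indicator measurableSet_Iio).comp_aemeasurable
    hmeas).aestronglyMeasurable 1 (ae_of_all _ fun x => ?_)
  exact (norm_indicator_le_norm_self _ _).trans norm_one.le

theorem ExpIntegrable.exists_integral_abs_mul_sq_lt (hh : ExpIntegrable h μ) {ε : ℝ}
    (hε : 0 < ε) : ∃ p : MvPolynomial ι ℝ,
      Integrable (fun x => |h x| * (eval x p - (Set.Iio 0).indicator 1 (h x)) ^ 2) μ ∧
        ∫ x, |h x| * (eval x p - (Set.Iio 0).indicator 1 (h x)) ^ 2 ∂μ < ε := by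
  have := hh.hasExpMoments_withDensity_abs
  have habs : AEMeasurable (fun x => |h x|) μ := hh.integrable.aemeasurable.abs
  obtain ⟨p, hp⟩ := exists_integral_sq_eval_sub_lt hh.memLp_two_indicator_Iio hε
  rw [integral_withDensity_ofReal habs fun _ => abs_nonneg _] at hp
  refine ⟨p, ?_, hp⟩
  rw [← integrable_withDensity_ofReal_iff habs fun _ => abs_nonneg _]
  exact ((memLp_two_mvPolynomial p).sub hh.memLp_two_indicator_Iio).integrable_sq

theorem ExpIntegrable.ae_nonneg_of_forall_integral_mul_sq_nonneg (hh : ExpIntegrable h μ)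
    (hsq : ∀ p : MvPolynomial ι ℝ, 0 ≤ ∫ x, h x * eval x (p ^ 2) ∂μ) : 0 ≤ᵐ[μ] h := by
  have hneg_nonneg : 0 ≤ᵐ[μ] fun x => max (-h x) 0 := ae_of_all _ fun _ => le_max_right _ _
  have hneg_le : ∫ x, max (-h x) 0 ∂μ ≤ 0 := by
    refine le_of_forall_pos_le_add fun ε hε => ?_
    obtain ⟨p, hint, hp⟩ := hh.exists_integral_abs_mul_sq_lt (half_pos hε)
    have hmul := (hh.mul_eval (p ^ 2)).integrable
    calc ∫ x, max (-h x) 0 ∂μ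
        ≤ ∫ x, (-2 * (h x * eval x (p ^ 2)) +
            2 * (|h x| * (eval x p - (Set.Iio 0).indicator 1 (h x)) ^ 2)) ∂μ :=
          integral_mono hh.integrable.neg_part ((hmul.const_mul _).add (hint.const_mul _))
            fun x => by simpa only [map_pow] using! max_neg_zero_le (h x) (eval x p)
      _ = -2 * ∫ x, h x * eval x (p ^ 2) ∂μ +
            2 * ∫ x, |h x| * (eval x p - (Set.Iio 0).indicator 1 (h x)) ^ 2 ∂μ := by
          rw [integral_add (hmul.const_mul _) (hint.const_mul _), integral_const_mul,
            integral_const_mul]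
      _ ≤ 0 + ε := by linarith [hsq p]
  filter_upwards [(integral_eq_zero_iff_of_nonneg_ae hneg_nonneg hh.integrable.neg_part).1
    (hneg_le.antisymm (integral_nonneg_of_ae hneg_nonneg))] with x hx
  exact neg_nonpos.1 (max_eq_right_iff.1 hx)

end Nonnegativity

section Representation

theorem exists_forall_eq_inner_of_abs_le {V H : Type*} [AddCommGroup V] [Module ℝ V]
    [NormedAddCommGroup H] [InnerProductSpace ℝ H] [CompleteSpace H] (J : V →ₗ[ℝ] H)
    (L : V →ₗ[ℝ] ℝ) (B : ℝ) (hL : ∀ v, |L v| ≤ B * ‖J v‖) :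
    ∃ h : H, ∀ v, L v = inner ℝ h (J v) := by
  have hker : J.ker ≤ L.ker := fun v hv => by
    have hv0 := hL v
    rw [LinearMap.mem_ker.1 hv, norm_zero, mul_zero] at hv0
    exact abs_nonpos_iff.1 hv0
  let L' : J.range →ₗ[ℝ] ℝ := (J.ker.liftQ L hker).comp J.quotKerEquivRange.symm.toLinearMap
  have hL' : ∀ v, L' ⟨J v, v, rfl⟩ = L v := fun v => by
    rw [LinearMap.comp_apply, LinearEquiv.coe_coe,
      J.quotKerEquivRange_symm_apply_image v (J.mem_range_self v), Submodule.mkQ_apply,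
      Submodule.liftQ_apply]
  have hbound : ∀ z : J.range, ‖L' z‖ ≤ B * ‖z‖ := by
    rintro ⟨_, v, rfl⟩
    rw [hL']
    exact hL v
  obtain ⟨G, hG, -⟩ := exists_extension_norm_eq _ (L'.mkContinuous B hbound)
  refine ⟨(InnerProductSpace.toDual ℝ H).symm G, fun v => ?_⟩
  rw [InnerProductSpace.toDual_symm_apply, ← hL' v]
  exact (hG ⟨J v, v, rfl⟩).symm

theorem sq_le_map_one_mul_map_sq {A : Type*} [CommRing A] [Algebra ℝ A] (L : A →ₗ[ℝ] ℝ)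
    (hL : ∀ a, 0 ≤ L (a ^ 2)) (a : A) : L a ^ 2 ≤ L 1 * L (a ^ 2) := by
  have hquad : ∀ t : ℝ, 0 ≤ L 1 * (t * t) + 2 * L a * t + L (a ^ 2) := fun t => by
    have hexpand : (a + t • (1 : A)) ^ 2 = a ^ 2 + (2 * t) • a + (t * t) • (1 : A) := by
      simp only [Algebra.smul_def, map_mul, map_ofNat]
      ring
    have hsq := hL (a + t • 1)
    rw [hexpand, map_add, map_add, map_smul, map_smul, smul_eq_mul, smul_eq_mul] at hsq
    linarith
  have hdiscrim := discrim_le_zero hquad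
  rw [discrim] at hdiscrim
  linarith

section Density

variable {ι : Type*} [Fintype ι] {ν : Measure (ι → ℝ)} [HasExpMoments ν]
  {L : MvPolynomial ι ℝ →ₗ[ℝ] ℝ}

theorem exists_memLp_two_forall_eq_integral (hL : ∀ p, 0 ≤ L (p ^ 2))
    (hLν : ∀ p, L (p ^ 2) ≤ polyIntegral ν (p ^ 2)) :
    ∃ h : (ι → ℝ) → ℝ, MemLp h 2 ν ∧ ∀ p, L p = ∫ x, h x * eval x p ∂ν := by
  have hL1 : 0 ≤ L 1 := by simpa only [one_pow] using hL 1
  obtain ⟨h, hh⟩ := exists_forall_eq_inner_of_abs_le (polyLp ν) L √(L 1) fun p => by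
    refine abs_le_of_sq_le_sq ?_ (by positivity)
    rw [mul_pow, Real.sq_sqrt hL1, norm_polyLp_sq]
    exact (sq_le_map_one_mul_map_sq L hL p).trans (mul_le_mul_of_nonneg_left (hLν p) hL1)
  exact ⟨h, Lp.memLp h, fun p => by rw [hh, inner_polyLp]⟩

theorem ae_le_one_of_forall_integral_mul_sq_le {h : (ι → ℝ) → ℝ} (hh : ExpIntegrable h ν)
    (hle : ∀ p, ∫ x, h x * eval x (p ^ 2) ∂ν ≤ polyIntegral ν (p ^ 2)) : h ≤ᵐ[ν] 1 := by
  have hnonneg := (expIntegrable_one.sub hh).ae_nonneg_of_forall_integral_mul_sq_nonneg fun p => by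
    simp only [sub_mul, one_mul]
    rw [integral_sub (integrable_mvPolynomial _) (hh.mul_eval _).integrable]
    exact sub_nonneg.2 (hle p)
  filter_upwards [hnonneg] with x hx using sub_nonneg.1 hx

end Density

variable {n m : ℕ}

theorem isClosed_semialg (g : Fin m → MvPolynomial (Fin n) ℝ) : IsClosed (semialg g) := by
  simp only [semialg, Set.ofPred_forall]
  exact isClosed_iInter fun j => isClosed_le continuous_const (continuous_eval (g j))

theorem map_one_le_measure_semialg {ν : Measure (Fin n → ℝ)} [HasExpMoments ν]
    {g : Fin m → MvPolynomial (Fin n) ℝ} {L : MvPolynomial (Fin n) ℝ →ₗ[ℝ] ℝ}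
    (hL : ∀ p, 0 ≤ L (p ^ 2)) (hLν : ∀ p, L (p ^ 2) ≤ polyIntegral ν (p ^ 2))
    (hLg : ∀ j p, 0 ≤ L (g j * p ^ 2)) : L 1 ≤ (ν (semialg g)).toReal := by
  obtain ⟨h, hmem, hrep⟩ := exists_memLp_two_forall_eq_integral hL hLν
  have hh : ExpIntegrable h ν := .of_memLp_two hmem
  have hle_one : h ≤ᵐ[ν] 1 := ae_le_one_of_forall_integral_mul_sq_le hh fun p =>
    (hrep _).symm.trans_le (hLν p)
  have hmul_nonneg : ∀ᵐ x ∂ν, ∀ j, 0 ≤ h x * eval x (g j) := by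
    refine ae_all_iff.2 fun j =>
      (hh.mul_eval (g j)).ae_nonneg_of_forall_integral_mul_sq_nonneg fun p => ?_
    simpa only [hrep, map_mul, mul_assoc] using hLg j p
  have hΩ : MeasurableSet (semialg g) := (isClosed_semialg g).measurableSet
  calc L 1 = ∫ x, h x ∂ν := by simp only [hrep, map_one, mul_one]
    _ ≤ ∫ x, (semialg g).indicator 1 x ∂ν := by
      refine integral_mono_ae hh.integrable ((integrable_const 1).indicator hΩ) ?_
      filter_upwards [hle_one, hmul_nonneg] with x hx_le hx_mul
      by_cases hx : x ∈ semialg g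
      · rwa [Set.indicator_of_mem hx]
      · rw [Set.indicator_of_notMem hx]
        by_contra! hpos
        exact hx fun j => nonneg_of_mul_nonneg_right (hx_mul j) hpos
    _ = (ν (semialg g)).toReal := integral_indicator_one hΩ

end Representation

section StokesOnLine

variable {k k' : ℝ → ℝ} {s : Set ℝ}

theorem integral_eq_zero_of_hasDerivAt_off_countable {F F' : ℝ → ℝ} {Z : Set ℝ}
    (hZ : Z.Countable) (hcont : Continuous F) (hderiv : ∀ t ∉ Z, HasDerivAt F (F' t) t)
    (hint : Integrable F') (hbot : Tendsto F atBot (𝓝 0)) (htop : Tendsto F atTop (𝓝 0)) :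
    ∫ t, F' t = 0 := by
  have hFTC : ∀ R : ℝ, ∫ t in (-R)..R, F' t = F R - F (-R) := fun R =>
    integral_eq_of_hasDerivAt_off_countable _ _ hZ hcont.continuousOn
      (fun t ht => hderiv t ht.2) hint.intervalIntegrable
  have hlim := intervalIntegral_tendsto_integral hint tendsto_neg_atTop_atBot tendsto_id
  simp only [id, hFTC] at hlim
  simpa only [sub_zero] using
    tendsto_nhds_unique hlim (htop.sub (hbot.comp tendsto_neg_atTop_atBot))

theorem countable_setOfPred_eq_zero_and_deriv_ne_zero (hk : ∀ t, HasDerivAt k (k' t) t) :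
    {t | k t = 0 ∧ k' t ≠ 0}.Countable := by
  refine (HereditarilyLindelofSpace.isLindelof _).countable_of_isDiscrete
    (isDiscrete_iff_nhdsNE.2 fun t ht => inf_principal_eq_bot.2 ?_)
  filter_upwards [(hk t).eventually_ne (c := 0) ht.2] with x hx hmem using hx hmem.1

theorem hasDerivAt_indicator_of_notMem_frontier {t : ℝ} (hk : HasDerivAt k (k' t) t)
    (ht : t ∉ frontier s) : HasDerivAt (s.indicator k) (s.indicator k' t) t := by
  by_cases hts : t ∈ s
  · have hnhds : s ∈ 𝓝 t := by
      rw [frontier_eq_closure_inter_closure, Set.mem_inter_iff, not_and] at ht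
      simpa only [← mem_interior_iff_mem_nhds, closure_compl, Set.mem_compl_iff, not_not]
        using ht (subset_closure hts)
    rw [Set.indicator_of_mem hts]
    exact hk.congr_of_eventuallyEq (Set.eqOn_indicator.eventuallyEq_of_mem hnhds)
  · have hnhds : sᶜ ∈ 𝓝 t := by
      rw [← frontier_compl, frontier_eq_closure_inter_closure, Set.mem_inter_iff, not_and,
        compl_compl] at ht
      rw [← mem_interior_iff_mem_nhds, interior_compl]
      exact ht (subset_closure hts)
    rw [Set.indicator_of_notMem hts]
    exact (hasDerivAt_const t 0).congr_of_eventuallyEq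
      (Set.eqOn_indicator'.eventuallyEq_of_mem hnhds)

theorem hasDerivAt_indicator_zero {t : ℝ} (hk : HasDerivAt k 0 t) (ht : k t = 0) :
    HasDerivAt (s.indicator k) 0 t := by
  have ht' : s.indicator k t = 0 := Set.indicator_apply_eq_zero.2 fun _ => ht
  rw [hasDerivAt_iff_isLittleO] at hk ⊢
  simp only [ht, ht', smul_zero, sub_zero] at hk ⊢
  exact (Asymptotics.isBigO_of_le _ fun x => norm_indicator_le_norm_self k x).trans_isLittleO hk

theorem integral_indicator_deriv_eq_zero (hk : ∀ t, HasDerivAt k (k' t) t) (hki : Integrable k)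
    (hk'i : Integrable k') (hs : MeasurableSet s) (hfr : ∀ t ∈ frontier s, k t = 0) :
    ∫ t, s.indicator k' t = 0 := by
  have hcont : Continuous k := continuous_iff_continuousAt.2 fun t => (hk t).continuousAt
  have hlim : ∀ {l : Filter ℝ}, Tendsto k l (𝓝 0) → Tendsto (s.indicator k) l (𝓝 0) := fun h =>
    squeeze_zero_norm (fun t => norm_indicator_le_norm_self k t)
      (tendsto_zero_iff_norm_tendsto_zero.1 h)
  refine integral_eq_zero_of_hasDerivAt_off_countable
    (countable_setOfPred_eq_zero_and_deriv_ne_zero hk) (hcont.indicator hfr) (fun t ht => ?_)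
    (hk'i.indicator hs)
    (hlim (tendsto_zero_of_hasDerivAt_of_integrableOn_Iic (a := 0) (fun t _ => hk t)
      hk'i.integrableOn hki.integrableOn))
    (hlim (tendsto_zero_of_hasDerivAt_of_integrableOn_Ioi (a := 0) (fun t _ => hk t)
      hk'i.integrableOn hki.integrableOn))
  by_cases htfr : t ∈ frontier s
  · have hk't : k' t = 0 := not_not.1 fun h => ht ⟨hfr t htfr, h⟩
    rw [Set.indicator_apply_eq_zero.2 fun _ => hk't]
    exact hasDerivAt_indicator_zero (hk't ▸ hk t) (hfr t htfr)
  · exact hasDerivAt_indicator_of_notMem_frontier (hk t) htfr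

end StokesOnLine

section StokesGaussian

variable {n : ℕ}

theorem ae_integrable_insertNth {F : (Fin (n + 1) → ℝ) → ℝ} (hF : Integrable F)
    (i : Fin (n + 1)) :
    ∀ᵐ y : Fin n → ℝ, Integrable fun t : ℝ => F (i.insertNth t y) := by
  have hmp := (volume_preserving_piFinSuccAbove (fun _ : Fin (n + 1) => ℝ) i).symm
  exact ((hmp.integrable_comp_emb (MeasurableEquiv.measurableEmbedding _)).2 hF).prod_left_ae

theorem integral_eq_integral_integral_insertNth {F : (Fin (n + 1) → ℝ) → ℝ} (hF : Integrable F)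
    (i : Fin (n + 1)) : ∫ x, F x = ∫ y : Fin n → ℝ, ∫ t : ℝ, F (i.insertNth t y) := by
  have hmp := (volume_preserving_piFinSuccAbove (fun _ : Fin (n + 1) => ℝ) i).symm
  rw [← hmp.integral_comp' F]
  exact integral_prod_symm _
    ((hmp.integrable_comp_emb (MeasurableEquiv.measurableEmbedding _)).2 hF)

theorem setIntegral_deriv_update_eq_zero {K K' : (Fin n → ℝ) → ℝ} {Ω : Set (Fin n → ℝ)}
    (i : Fin n) (hderiv : ∀ x, HasDerivAt (fun t => K (Function.update x i t)) (K' x) (x i))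
    (hK : Integrable K) (hK' : Integrable K') (hΩ : MeasurableSet Ω)
    (hfr : ∀ x ∈ frontier Ω, K x = 0) : ∫ x in Ω, K' x = 0 := by
  obtain ⟨n, rfl⟩ := Nat.exists_eq_succ_of_ne_zero i.pos.ne'
  rw [← integral_indicator hΩ, integral_eq_integral_integral_insertNth (hK'.indicator hΩ) i]
  refine integral_eq_zero_of_ae ?_
  filter_upwards [ae_integrable_insertNth hK i, ae_integrable_insertNth hK' i] with y hy hy'
  have hline : Continuous fun t : ℝ => (i.insertNth t y : Fin (n + 1) → ℝ) :=
    Continuous.finInsertNth (A := fun _ => ℝ) i continuous_id continuous_const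
  have hderiv_line : ∀ t : ℝ,
      HasDerivAt (fun t : ℝ => K (i.insertNth t y)) (K' (i.insertNth t y)) t := fun t => by
    simpa only [Fin.update_insertNth, Fin.insertNth_apply_same] using hderiv (i.insertNth t y)
  exact integral_indicator_deriv_eq_zero hderiv_line hy hy' (hline.measurable hΩ)
    fun t ht => hfr _ (hline.frontier_preimage_subset Ω ht)

theorem hasDerivAt_eval_update {ι : Type*} [DecidableEq ι] (p : MvPolynomial ι ℝ) (i : ι)
    (x : ι → ℝ) :
    HasDerivAt (fun t : ℝ => eval (Function.update x i t) p) (eval x (pderiv i p)) (x i) := by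
  induction p using MvPolynomial.induction_on with
  | C a => simpa only [eval_C, pderiv_C, map_zero] using hasDerivAt_const (x i) a
  | add p q hp hq => simpa only [map_add] using! hp.add hq
  | mul_X p j hp =>
    have hX : HasDerivAt (fun t : ℝ => Function.update x i t j) ((Pi.single i 1 : ι → ℝ) j) (x i) :=
      hasDerivAt_pi.1 (hasDerivAt_update x i (x i)) j
    simp only [map_mul, eval_X]
    refine (hp.mul hX).congr_deriv ?_
    rw [Derivation.leibniz, pderiv_X, Function.update_eq_self]
    by_cases hj : j = i
    · subst hj
      simp [mul_comm, add_comm]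
    · simp [hj, mul_comm]

theorem hasDerivAt_gaussianDensity_update (i : Fin n) (x : Fin n → ℝ) :
    HasDerivAt (fun t : ℝ => gaussianDensity n (Function.update x i t))
      (-x i * gaussianDensity n x) (x i) := by
  have hsum := hasDerivAt_eval_update (∑ j, X j ^ 2 : MvPolynomial (Fin n) ℝ) i x
  have hpderiv : eval x (pderiv i (∑ j, X j ^ 2 : MvPolynomial (Fin n) ℝ)) = 2 * x i := by
    simp [Derivation.leibniz_pow, pderiv_X, Pi.single_apply]
  rw [hpderiv] at hsum
  simp only [map_sum, map_pow, eval_X] at hsum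
  have hexp := (hsum.fun_neg.div_const 2).exp.const_mul ((2 * Real.pi) ^ (-(n : ℝ) / 2))
  refine hexp.congr_deriv ?_
  simp only [Function.update_eq_self, gaussianDensity]
  ring

theorem setIntegral_gaussianMeasure_stokes {Ω : Set (Fin n → ℝ)} (hΩ : MeasurableSet Ω)
    {q : MvPolynomial (Fin n) ℝ} (hq : ∀ x ∈ frontier Ω, eval x q = 0) (i : Fin n) :
    ∫ x in Ω, eval x (pderiv i q - X i * q) ∂gaussianMeasure n = 0 := by
  have hint : ∀ p : MvPolynomial (Fin n) ℝ, Integrable fun x => gaussianDensity n x * eval x p :=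
    fun p => integrable_gaussianMeasure_iff.1 (integrable_mvPolynomial p)
  rw [← integral_indicator hΩ, integral_gaussianMeasure]
  simp only [← Set.indicator_mul_right]
  rw [integral_indicator hΩ]
  refine setIntegral_deriv_update_eq_zero i (fun x => ?_) (hint q) (hint _) hΩ
    fun x hx => by rw [hq x hx, mul_zero]
  refine ((hasDerivAt_gaussianDensity_update i x).mul
    (hasDerivAt_eval_update q i x)).congr_deriv ?_
  simp only [Function.update_eq_self, map_sub, map_mul, eval_X]
  ring

end StokesGaussian

section Hierarchy

variable {n m d e : ℕ} {g : Fin m → MvPolynomial (Fin n) ℝ} {f p : MvPolynomial (Fin n) ℝ}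
  {u v : (Fin n →₀ ℕ) → ℝ}

theorem IsSOS.polyIntegral_nonneg (hp : IsSOS d p) (ν : Measure (Fin n → ℝ)) [HasExpMoments ν] :
    0 ≤ polyIntegral ν p :=
  hp.map_nonneg fun q _ => polyIntegral_sq_nonneg ν q

/-- The span of the Stokes polynomials `p_{i,α}` of degree at most `2d`, the multipliers of the
Stokes constraints in the dual of the relaxation of order `d`. -/
noncomputable def stokesSpan (f : MvPolynomial (Fin n) ℝ) (d : ℕ) :
    Submodule ℝ (MvPolynomial (Fin n) ℝ) :=
  Submodule.span ℝ {h | ∃ (i : Fin n) (β : Fin n →₀ ℕ),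
    (pStokesG f i β).totalDegree ≤ 2 * d ∧ h = pStokesG f i β}

/-- The objective values of the semidefinite dual of the program defining `omegabar g f d`. -/
def stokesDualValues (g : Fin m → MvPolynomial (Fin n) ℝ) (f : MvPolynomial (Fin n) ℝ) (d : ℕ) :
    Set ℝ :=
  {r | ∃ p q : MvPolynomial (Fin n) ℝ, IsSOS d p ∧ p.totalDegree ≤ 2 * d ∧ q ∈ stokesSpan f d ∧
    InQM g d (p + q - 1) ∧ r = ∫ x, eval x p ∂gaussianMeasure n}

theorem stokesDualValues_eq_conicValues (g : Fin m → MvPolynomial (Fin n) ℝ)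
    (f : MvPolynomial (Fin n) ℝ) (d : ℕ) :
    stokesDualValues g f d = conicValues (sosCone n d)
      (qmCone g d ⊔ PointedCone.ofSubmodule (stokesSpan f d))
      (polyIntegral (gaussianMeasure n)) 1 := by
  ext r
  constructor
  · rintro ⟨p, q, hp, -, hq, hpq, hr⟩
    refine ⟨p, hp, Submodule.mem_sup.2 ⟨_, hpq, -q, (stokesSpan f d).neg_mem hq, ?_⟩, hr⟩
    ring
  · rintro ⟨p, hp, hmem, hr⟩
    obtain ⟨t, ht, q, hq, htq⟩ := Submodule.mem_sup.1 hmem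
    refine ⟨p, -q, hp, hp.totalDegree_le, (stokesSpan f d).neg_mem hq, ?_, hr⟩
    rwa [add_sub_right_comm, ← htq, add_neg_cancel_right]

theorem bddBelow_stokesDualValues (g : Fin m → MvPolynomial (Fin n) ℝ)
    (f : MvPolynomial (Fin n) ℝ) (d : ℕ) : BddBelow (stokesDualValues g f d) := by
  rw [stokesDualValues_eq_conicValues]
  exact bddBelow_conicValues (fun p hp => IsSOS.polyIntegral_nonneg hp _) 1

theorem mem_stokesDualValues (f : MvPolynomial (Fin n) ℝ) (hp : IsSOS d p)
    (hpg : InQM g d (p - 1)) :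
    polyIntegral (gaussianMeasure n) p ∈ stokesDualValues g f d :=
  ⟨p, 0, hp, hp.totalDegree_le, Submodule.zero_mem _, by rwa [add_zero], rfl⟩

theorem nonempty_stokesDualValues (g : Fin m → MvPolynomial (Fin n) ℝ)
    (f : MvPolynomial (Fin n) ℝ) (d : ℕ) : (stokesDualValues g f d).Nonempty := by
  have hone : IsSOS d (1 : MvPolynomial (Fin n) ℝ) := one_pow (M := MvPolynomial (Fin n) ℝ) 2 ▸
    IsSOS.sq (by simp)
  exact ⟨_, mem_stokesDualValues f hone (sub_self (1 : MvPolynomial (Fin n) ℝ) ▸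
    InQM.of_isSOS g (IsSOS.zero d))⟩

theorem Feasible.rieszLinear_add (h : Feasible g d u v) (hp : p.totalDegree ≤ 2 * d) :
    rieszLinear u p + rieszLinear v p = polyIntegral (gaussianMeasure n) p :=
  linearMap_eq_of_monomial_eq (L := rieszLinear u + rieszLinear v) (fun α hα => by
    rw [LinearMap.add_apply, rieszLinear_monomial, rieszLinear_monomial, h.1 α hα,
      gmom_eq_polyIntegral]) hp

theorem Feasible.apply_zero_le (h : Feasible g d u v) : u 0 ≤ gmom n 0 := by
  have hsum := h.1 0 (by simp [fdeg])
  have hv := h.2.2.1 1 (by simp)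
  rw [one_pow, riesz_one] at hv
  linarith

theorem FeasibleS.rieszLinear_eq_zero (h : FeasibleS g f d u v) (hp : p ∈ stokesSpan f d) :
    rieszLinear u p = 0 := by
  have hle : stokesSpan f d ≤ LinearMap.ker (rieszLinear u) := by
    refine Submodule.span_le.2 ?_
    rintro _ ⟨i, α, hα, rfl⟩
    exact (riesz_eq_rieszLinear u _).symm.trans (h.2 i α hα)
  exact hle hp

theorem FeasibleS.apply_zero_le (h : FeasibleS g f d u v) {r : ℝ}
    (hr : r ∈ stokesDualValues g f d) : u 0 ≤ r := by
  obtain ⟨p, q, hp, hpd, hq, hpq, rfl⟩ := hr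
  obtain ⟨hfeas, -⟩ := id h
  have hnonneg_u : 0 ≤ rieszLinear u (p + q - 1) := hpq.map_nonneg
    (fun s hs => riesz_eq_rieszLinear u _ ▸ hfeas.2.1 s hs)
    (fun j s hs => riesz_eq_rieszLinear u _ ▸ hfeas.2.2.2 j s hs)
  have hnonneg_v : 0 ≤ rieszLinear v p := hp.map_nonneg
    fun s hs => riesz_eq_rieszLinear v _ ▸ hfeas.2.2.1 s hs
  calc u 0 = rieszLinear u 1 := by rw [← riesz_eq_rieszLinear, riesz_one]
    _ ≤ rieszLinear u p := by
      rw [map_sub, map_add, h.rieszLinear_eq_zero hq] at hnonneg_u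
      linarith
    _ ≤ rieszLinear u p + rieszLinear v p := le_add_of_nonneg_right hnonneg_v
    _ = ∫ x, eval x p ∂gaussianMeasure n := hfeas.rieszLinear_add hpd

theorem FeasibleS.mono (hde : d ≤ e) (h : FeasibleS g f e u v) : FeasibleS g f d u v := by
  obtain ⟨⟨hsum, hu, hv, hloc⟩, hstokes⟩ := h
  exact ⟨⟨fun α hα => hsum α (by lia), fun p hp => hu p (hp.trans hde),
    fun p hp => hv p (hp.trans hde), fun j p hp => hloc j p (by lia)⟩,
    fun i α hα => hstokes i α (by lia)⟩

theorem feasibleS_of_linearMap {L : MvPolynomial (Fin n) ℝ →ₗ[ℝ] ℝ}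
    (hsq : ∀ p, p.totalDegree ≤ d → 0 ≤ L (p ^ 2))
    (hsq_le : ∀ p, p.totalDegree ≤ d → L (p ^ 2) ≤ polyIntegral (gaussianMeasure n) (p ^ 2))
    (hloc : ∀ j p, p.totalDegree ≤ d - dHalf (g j) → 0 ≤ L (g j * p ^ 2))
    (hstokes : ∀ i α, (pStokesG f i α).totalDegree ≤ 2 * d → L (pStokesG f i α) = 0) :
    FeasibleS g f d (fun α => L (monomial α 1))
      (fun α => (polyIntegral (gaussianMeasure n) - L) (monomial α 1)) := by
  refine ⟨⟨fun α _ => ?_, fun p hp => ?_, fun p hp => ?_, fun j p hp => ?_⟩, fun i α hα => ?_⟩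
  · simp only [LinearMap.sub_apply, gmom_eq_polyIntegral, add_sub_cancel]
  · exact (hsq p hp).trans_eq (riesz_linearMap_monomial L _).symm
  · rw [riesz_linearMap_monomial, LinearMap.sub_apply]
    exact sub_nonneg.2 (hsq_le p hp)
  · exact (hloc j p hp).trans_eq (riesz_linearMap_monomial L _).symm
  · exact (riesz_linearMap_monomial L _).trans (hstokes i α hα)

theorem exists_feasibleS_eq_sInf_stokesDualValues (f : MvPolynomial (Fin n) ℝ)
    (hd : ∀ j, dHalf (g j) ≤ d) :
    ∃ u v, FeasibleS g f d u v ∧ u 0 = sInf (stokesDualValues g f d) := by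
  obtain ⟨L, hLP, hLT, hL1⟩ := exists_linearMap_eq_sInf_conicValues_of_le
    (P := sosCone n d) (T := qmCone g d ⊔ PointedCone.ofSubmodule (stokesSpan f d))
    (W := restrictTotalDegree (Fin n) ℝ (2 * d)) (I := polyIntegral (gaussianMeasure n)) (e := 1)
    (fun p hp => (mem_restrictTotalDegree _ _ _).2 (IsSOS.totalDegree_le hp))
    (fun p hp => IsSOS.polyIntegral_nonneg hp _)
    (fun h hh => by
      obtain ⟨s, t, hs, ht, rfl⟩ := exists_eq_isSOS_sub_isSOS ((mem_restrictTotalDegree _ _ _).1 hh)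
      refine ⟨s, hs, Submodule.mem_sup_left ?_⟩
      rw [sub_sub_cancel]
      exact InQM.of_isSOS g ht)
    ((mem_restrictTotalDegree _ _ _).2 (by simp))
  have hQM : ∀ p, InQM g d p → p.totalDegree ≤ 2 * d → 0 ≤ L p := fun p hp hpd =>
    hLT p (Submodule.mem_sup_left hp) ((mem_restrictTotalDegree _ _ _).2 hpd)
  have hspan : ∀ p ∈ stokesSpan f d, p.totalDegree ≤ 2 * d → 0 ≤ L p := fun p hp hpd =>
    hLT p (Submodule.mem_sup_right hp) ((mem_restrictTotalDegree _ _ _).2 hpd)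
  refine ⟨_, _, feasibleS_of_linearMap (L := L) (fun p hp => ?_) (fun p hp => ?_)
    (fun j p hp => ?_) (fun i α hα => ?_), hL1.trans ?_⟩
  · exact hQM _ (.of_isSOS g (.sq hp)) (IsSOS.sq hp).totalDegree_le
  · exact hLP _ (IsSOS.sq hp)
  · exact hQM _ (.mul_sq g j hp) (totalDegree_mul_sq_le (hd j) hp)
  · have hmem : pStokesG f i α ∈ stokesSpan f d := Submodule.subset_span ⟨i, α, hα, rfl⟩
    have hneg := hspan _ ((stokesSpan f d).neg_mem hmem) ((totalDegree_neg _).trans_le hα)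
    rw [map_neg] at hneg
    linarith [hspan _ hmem hα]
  · rw [stokesDualValues_eq_conicValues]

theorem isGreatest_sInf_stokesDualValues (f : MvPolynomial (Fin n) ℝ)
    (hd : ∀ j, dHalf (g j) ≤ d) :
    IsGreatest {r : ℝ | ∃ u v, FeasibleS g f d u v ∧ r = u 0} (sInf (stokesDualValues g f d)) := by
  obtain ⟨u, v, huv, hu⟩ := exists_feasibleS_eq_sInf_stokesDualValues f hd
  refine ⟨⟨u, v, huv, hu.symm⟩, ?_⟩
  rintro _ ⟨u', v', huv', rfl⟩
  exact le_csInf (nonempty_stokesDualValues g f d) fun r hr => huv'.apply_zero_le hr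

theorem omegabar_eq_sInf_stokesDualValues (f : MvPolynomial (Fin n) ℝ)
    (hd : ∀ j, dHalf (g j) ≤ d) : omegabar g f d = sInf (stokesDualValues g f d) :=
  (isGreatest_sInf_stokesDualValues f hd).csSup_eq

theorem isGreatest_omegabar (f : MvPolynomial (Fin n) ℝ) (hd : ∀ j, dHalf (g j) ≤ d) :
    IsGreatest {r : ℝ | ∃ u v, FeasibleS g f d u v ∧ r = u 0} (omegabar g f d) := by
  rw [omegabar_eq_sInf_stokesDualValues f hd]
  exact isGreatest_sInf_stokesDualValues f hd

theorem omegabar_anti (f : MvPolynomial (Fin n) ℝ) (hd : ∀ j, dHalf (g j) ≤ d) (hde : d ≤ e) :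
    omegabar g f e ≤ omegabar g f d := by
  obtain ⟨u, v, huv, hu⟩ := (isGreatest_omegabar f fun j => (hd j).trans hde).1
  exact (isGreatest_omegabar f hd).2 ⟨u, v, huv.mono hde, hu⟩

theorem omegabar_le_obar_one (f : MvPolynomial (Fin n) ℝ) (hd : ∀ j, dHalf (g j) ≤ d) :
    omegabar g f d ≤ obar g d 1 := by
  obtain ⟨u, v, huv, hu⟩ := (isGreatest_omegabar f hd).1
  refine le_csSup ⟨gmom n 0, ?_⟩ ⟨u, v, huv.1, by rw [riesz_one, hu]⟩
  rintro _ ⟨u', v', huv', rfl⟩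
  rw [riesz_one]
  exact huv'.apply_zero_le

theorem feasibleS_restrict_gaussianMeasure (hf : ∀ x ∈ frontier (semialg g), eval x f = 0)
    (d : ℕ) : ∃ u v, FeasibleS g f d u v ∧ u 0 = (gaussianMeasure n (semialg g)).toReal := by
  have hΩ : MeasurableSet (semialg g) := (isClosed_semialg g).measurableSet
  set L := polyIntegral ((gaussianMeasure n).restrict (semialg g)) with hL
  refine ⟨_, _, feasibleS_of_linearMap (L := L) (fun p _ => polyIntegral_sq_nonneg _ p)
    (fun p _ => ?_) (fun j p _ => ?_) (fun i α _ => ?_), ?_⟩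
  · exact setIntegral_le_integral (integrable_mvPolynomial _)
      (.of_forall fun x => eval_sq_nonneg x p)
  · refine setIntegral_nonneg hΩ fun x hx => ?_
    rw [map_mul, map_pow]
    exact mul_nonneg (hx j) (sq_nonneg _)
  · exact setIntegral_gaussianMeasure_stokes hΩ
      (fun x hx => by rw [map_mul, hf x hx, mul_zero]) i
  · change L 1 = _
    simp [hL, polyIntegral_apply, Measure.real]

theorem measure_le_omegabar (hd : ∀ j, dHalf (g j) ≤ d)
    (hf : ∀ x ∈ frontier (semialg g), eval x f = 0) :
    (gaussianMeasure n (semialg g)).toReal ≤ omegabar g f d := by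
  obtain ⟨u, v, huv, hu⟩ := feasibleS_restrict_gaussianMeasure hf d
  exact (isGreatest_omegabar f hd).2 ⟨u, v, huv, hu.symm⟩

theorem exists_isSOS_polyIntegral_lt (ν : Measure (Fin n → ℝ)) [HasExpMoments ν]
    (g : Fin m → MvPolynomial (Fin n) ℝ) {c : ℝ} (hc : (ν (semialg g)).toReal < c) :
    ∃ p d, IsSOS d p ∧ InQM g d (p - 1) ∧ polyIntegral ν p < c := by
  have hI : ∀ p ∈ ⨆ d, sosCone n d, 0 ≤ polyIntegral ν p := fun p hp =>
    let ⟨_, hp⟩ := mem_iSup_sosCone.1 hp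
    hp.polyIntegral_nonneg ν
  have hdom : ∀ h, ∃ p ∈ ⨆ d, sosCone n d, p - h ∈ ⨆ d, qmCone g d := by
    intro h
    obtain ⟨s, t, hs, ht, rfl⟩ := exists_eq_isSOS_sub_isSOS
      (show h.totalDegree ≤ 2 * h.totalDegree by lia)
    refine ⟨s, mem_iSup_sosCone.2 ⟨_, hs⟩, ?_⟩
    rw [sub_sub_cancel]
    exact mem_iSup_qmCone.2 ⟨_, .of_isSOS g ht⟩
  obtain ⟨L, hLP, hLT, hL1⟩ := exists_linearMap_eq_sInf_conicValues hI hdom 1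
  have hL1_le : L 1 ≤ (ν (semialg g)).toReal := map_one_le_measure_semialg
    (fun p => hLT _ (mem_iSup_qmCone.2 ⟨_, .of_isSOS g (.sq le_rfl)⟩))
    (fun p => hLP _ (mem_iSup_sosCone.2 ⟨_, .sq le_rfl⟩))
    (fun j p => hLT _ (mem_iSup_qmCone.2
      ⟨p.totalDegree + dHalf (g j), .mul_sq g j (Nat.add_sub_cancel _ _).ge⟩))
  obtain ⟨_, ⟨p, hp, hpg, rfl⟩, hlt⟩ := exists_lt_of_csInf_lt
    (nonempty_conicValues hdom 1) (hL1 ▸ hL1_le.trans_lt hc)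
  obtain ⟨d, hp⟩ := mem_iSup_sosCone.1 hp
  obtain ⟨e, hpg⟩ := mem_iSup_qmCone.1 hpg
  exact ⟨p, max d e, hp.mono (le_max_left d e), hpg.mono (le_max_right d e), hlt⟩

theorem tendsto_omegabar (g : Fin m → MvPolynomial (Fin n) ℝ)
    (hf : ∀ x ∈ frontier (semialg g), eval x f = 0) :
    Tendsto (fun d => omegabar g f d) atTop (𝓝 (gaussianMeasure n (semialg g)).toReal) := by
  have hlarge : ∀ᶠ d in atTop, ∀ j, dHalf (g j) ≤ d :=
    eventually_all.2 fun j => eventually_ge_atTop _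
  refine tendsto_order.2 ⟨fun c hc => ?_, fun c hc => ?_⟩
  · filter_upwards [hlarge] with d hd using hc.trans_le (measure_le_omegabar hd hf)
  · obtain ⟨p, d, hp, hpg, hlt⟩ := exists_isSOS_polyIntegral_lt (gaussianMeasure n) g hc
    filter_upwards [hlarge, eventually_ge_atTop d] with e he hde
    rw [omegabar_eq_sInf_stokesDualValues f he]
    exact (csInf_le (bddBelow_stokesDualValues g f e)
      (mem_stokesDualValues f (hp.mono hde) (hpg.mono hde))).trans_lt hlt

end Hierarchy

theorem stmt17_general {n m : ℕ} (g : Fin m → MvPolynomial (Fin n) ℝ)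
    (f : MvPolynomial (Fin n) ℝ)
    (hfb : ∀ x ∈ frontier (semialg g), eval x f = 0)
    (d0 : ℕ) (hd0 : ∀ j, dHalf (g j) ≤ d0) :
    (∀ d, d0 ≤ d →
      IsGreatest {r : ℝ | ∃ u v, FeasibleS g f d u v ∧ r = u 0} (omegabar g f d) ∧
      omegabar g f d = sInf {r : ℝ | ∃ p q : MvPolynomial (Fin n) ℝ,
        IsSOS d p ∧ p.totalDegree ≤ 2 * d ∧
        q ∈ Submodule.span ℝ {h : MvPolynomial (Fin n) ℝ | ∃ (i : Fin n) (β : Fin n →₀ ℕ),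
          (pStokesG f i β).totalDegree ≤ 2 * d ∧ h = pStokesG f i β} ∧
        InQM g d (p + q - 1) ∧ r = ∫ x, eval x p ∂gaussianMeasure n}) ∧
    (∀ d, d0 ≤ d → omegabar g f (d + 1) ≤ omegabar g f d) ∧
    (∀ d, d0 ≤ d →
      (gaussianMeasure n (semialg g)).toReal ≤ omegabar g f d ∧
      omegabar g f d ≤ obar g d 1) ∧
    Tendsto (fun d => omegabar g f d) atTop
      (𝓝 (gaussianMeasure n (semialg g)).toReal) := by
  have hd : ∀ d, d0 ≤ d → ∀ j, dHalf (g j) ≤ d := fun d h j => (hd0 j).trans h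
  refine ⟨fun d h => ⟨isGreatest_omegabar f (hd d h), ?_⟩,
    fun d h => omegabar_anti f (hd d h) d.le_succ,
    fun d h => ⟨measure_le_omegabar (hd d h) hfb, omegabar_le_obar_one f (hd d h)⟩,
    tendsto_omegabar g hfb⟩
  exact omegabar_eq_sInf_stokesDualValues f (hd d h)

/-- the Stokes-augmented hierarchy. For the Gaussian measure, `Ω` and `ℝⁿ∖Ω`
with nonempty interior, and `f` vanishing on `∂Ω`: for every `d ≥ d₀` the program defining
`ω̄_d` attains its optimum and equals its semidefinite dual value; the sequence `(ω̄_d)` is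
monotone non-increasing with `μ(Ω) ≤ ω̄_d ≤ ō_d(1)`, and `ω̄_d → μ(Ω)`. -/
theorem stmt17 {n m : ℕ} (g : Fin m → MvPolynomial (Fin n) ℝ)
    (hΩ : (interior (semialg g)).Nonempty)
    (hΩc : (interior ((semialg g)ᶜ)).Nonempty)
    (f : MvPolynomial (Fin n) ℝ)
    (hfb : ∀ x ∈ frontier (semialg g), eval x f = 0)
    (d0 : ℕ) (hd0 : ∀ j, dHalf (g j) ≤ d0) :
    (∀ d, d0 ≤ d →
      IsGreatest {r : ℝ | ∃ u v, FeasibleS g f d u v ∧ r = u 0} (omegabar g f d) ∧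
      omegabar g f d = sInf {r : ℝ | ∃ p q : MvPolynomial (Fin n) ℝ,
        IsSOS d p ∧ p.totalDegree ≤ 2 * d ∧
        q ∈ Submodule.span ℝ {h : MvPolynomial (Fin n) ℝ | ∃ (i : Fin n) (β : Fin n →₀ ℕ),
          (pStokesG f i β).totalDegree ≤ 2 * d ∧ h = pStokesG f i β} ∧
        InQM g d (p + q - 1) ∧ r = ∫ x, eval x p ∂gaussianMeasure n}) ∧
    (∀ d, d0 ≤ d → omegabar g f (d + 1) ≤ omegabar g f d) ∧
    (∀ d, d0 ≤ d →
      (gaussianMeasure n (semialg g)).toReal ≤ omegabar g f d ∧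
      omegabar g f d ≤ obar g d 1) ∧
    Tendsto (fun d => omegabar g f d) atTop
      (𝓝 (gaussianMeasure n (semialg g)).toReal) :=
  stmt17_general g f hfb d0 hd0
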